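/- Let κ = κ^{<κ} be an uncountable cardinal with 2^κ = κ⁺. Then κ has the κ⁺-filter property (the challenger has no winning strategy in the filter game of length κ⁺) if and only if κ is measurable. Moreover, both are equivalent to the judge having a winning strategy in this game. -/

import Mathlib

universe u

open FirstOrder FirstOrder.Language ZFSet

/-- The relations of the language of set theory: a single binary relation `mem`. -/
inductive memRelType : ℕ → Type
  | mem : memRelType 2

/-- The first-order language of set theory, with a single binary relation `∈`. -/
def memLang : FirstOrder.Language :=
  ⟨fun _ => Empty, memRelType⟩

/-- Any collection of ZFC sets is an `∈`-structure, via true membership. -/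
instance zStruct (S : Set ZFSet.{u}) : memLang.Structure ↥S where
  funMap := fun f _ => f.elim
  RelMap := fun {n} r x =>
    match n, r, x with
    | _, memRelType.mem, x => (x 0 : ZFSet) ∈ (x 1 : ZFSet)

/-- The `i`-th (bound) variable as a term. -/
abbrev mvar {n : ℕ} (i : Fin n) : memLang.Term (Empty ⊕ Fin n) :=
  FirstOrder.Language.Term.var (Sum.inr i)

/-- The atomic membership formula `t ∈ u`. -/
def memF {n : ℕ} (t u : memLang.Term (Empty ⊕ Fin n)) : memLang.BoundedFormula Empty n :=
  Relations.boundedFormula₂ memRelType.mem t u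

/-- The axiom of extensionality. -/
def extAx : memLang.Sentence :=
  ∀' ∀' ((∀' ((memF (mvar 2) (mvar 0)) ⇔ (memF (mvar 2) (mvar 1)))) ⟹
    ((mvar 0) =' (mvar 1)))

/-- The empty set axiom. -/
def emptyAx : memLang.Sentence :=
  ∃' ∀' (∼ (memF (mvar 1) (mvar 0)))

/-- The pairing axiom. -/
def pairAx : memLang.Sentence :=
  ∀' ∀' ∃' ((memF (mvar 0) (mvar 2)) ⊓ (memF (mvar 1) (mvar 2)))

/-- The union axiom. -/
def unionAx : memLang.Sentence :=
  ∀' ∃' ∀' ∀' (((memF (mvar 2) (mvar 3)) ⊓ (memF (mvar 3) (mvar 0))) ⟹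
    (memF (mvar 2) (mvar 1)))

/-- The axiom of infinity. -/
def infAx : memLang.Sentence :=
  ∃' ((∃' ((memF (mvar 1) (mvar 0)) ⊓ ∀' (∼ (memF (mvar 2) (mvar 1))))) ⊓
    (∀' ((memF (mvar 1) (mvar 0)) ⟹
      ∃' ((memF (mvar 2) (mvar 0)) ⊓
        ∀' ((memF (mvar 3) (mvar 2)) ⇔
          ((memF (mvar 3) (mvar 1)) ⊔ ((mvar 3) =' (mvar 1))))))))

/-- The foundation axiom. -/
def foundAx : memLang.Sentence :=
  ∀' ((∃' (memF (mvar 1) (mvar 0))) ⟹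
    ∃' ((memF (mvar 1) (mvar 0)) ⊓
      ∀' (∼ ((memF (mvar 2) (mvar 0)) ⊓ (memF (mvar 2) (mvar 1))))))

/-- The axiom of choice, in the form: every family of nonempty pairwise disjoint sets
admits a selector. -/
def choiceAx : memLang.Sentence :=
  ∀' (((∀' ((memF (mvar 1) (mvar 0)) ⟹ ∃' (memF (mvar 2) (mvar 1)))) ⊓
      (∀' ∀' (((memF (mvar 1) (mvar 0)) ⊓ (memF (mvar 2) (mvar 0)) ⊓
          (∼ ((mvar 1) =' (mvar 2)))) ⟹
        ∼ (∃' ((memF (mvar 3) (mvar 1)) ⊓ (memF (mvar 3) (mvar 2))))))) ⟹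
    ∃' ∀' ((memF (mvar 2) (mvar 0)) ⟹
      ∃' ((memF (mvar 3) (mvar 2)) ⊓ (memF (mvar 3) (mvar 1)) ⊓
        ∀' (((memF (mvar 4) (mvar 2)) ⊓ (memF (mvar 4) (mvar 1))) ⟹
          ((mvar 4) =' (mvar 3))))))

/-- The separation axiom for the formula `φ(p₀,…,p_{n-1}, x)`. -/
def sepAx (n : ℕ) (φ : memLang.BoundedFormula Empty (n + 1)) : memLang.Sentence :=
  (∀' (∃' (∀' ((memF (mvar ⟨n + 2, by omega⟩) (mvar ⟨n + 1, by omega⟩)) ⇔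
    ((memF (mvar ⟨n + 2, by omega⟩) (mvar ⟨n, by omega⟩)) ⊓
      (φ.liftAt 2 n)))))).alls

/-- The collection axiom for the formula `φ(p₀,…,p_{n-1}, x, y)`. -/
def collAx (n : ℕ) (φ : memLang.BoundedFormula Empty (n + 2)) : memLang.Sentence :=
  (∀' ((∀' ((memF (mvar ⟨n + 1, by omega⟩) (mvar ⟨n, by omega⟩)) ⟹
        ∃' (φ.liftAt 1 n))) ⟹
      (∃' (∀' ((memF (mvar ⟨n + 2, by omega⟩) (mvar ⟨n, by omega⟩)) ⟹
        ∃' ((memF (mvar ⟨n + 3, by omega⟩) (mvar ⟨n + 1, by omega⟩)) ⊓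
          (φ.liftAt 2 n))))))).alls

/-- The power set axiom. -/
def powAx : memLang.Sentence :=
  ∀' ∃' ∀' ((∀' ((memF (mvar 3) (mvar 2)) ⟹ (memF (mvar 3) (mvar 0)))) ⟹
    (memF (mvar 2) (mvar 1)))

/-- The theory `ZFC⁻`: ZFC without the power set axiom, with collection. -/
def ZFCminus : memLang.Theory :=
  {extAx, emptyAx, pairAx, unionAx, infAx, foundAx, choiceAx} ∪
    (⋃ n : ℕ, Set.range (sepAx n)) ∪ (⋃ n : ℕ, Set.range (collAx n))

/-- The theory `ZFC`. -/
def ZFCfull : memLang.Theory := insert powAx ZFCminus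

/-- `S` is an elementary substructure of `T` with respect to the membership relation. -/
def ElemSub (S T : Set ZFSet.{u}) : Prop :=
  ∃ h : S ⊆ T, ∀ (n : ℕ) (φ : memLang.BoundedFormula Empty n) (x : Fin n → ↥S),
    φ.Realize Empty.elim x ↔
      φ.Realize Empty.elim (fun i => (⟨(x i : ZFSet), h (x i).2⟩ : ↥T))

/-- `j : S → T` is an elementary embedding of `∈`-structures. -/
def ElemEmbOf (S T : Set ZFSet.{u}) (j : ↥S → ↥T) : Prop :=
  ∀ (n : ℕ) (φ : memLang.BoundedFormula Empty n) (x : Fin n → ↥S),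
    φ.Realize Empty.elim x ↔ φ.Realize Empty.elim (j ∘ x)
/-- The cardinality of a ZFC set. -/
noncomputable def zcard (x : ZFSet.{u}) : Cardinal.{u + 1} := Cardinal.mk x.toSet

/-- `θ` is (the von Neumann representation of) a regular cardinal. -/
def IsRegCard (θ : ZFSet.{u}) : Prop :=
  θ.IsOrdinal ∧ (zcard θ).IsRegular ∧ ∀ x ∈ θ, zcard x < zcard θ

/-- `κ` is (the von Neumann representation of) a cardinal. -/
def IsCardZ (κ : ZFSet.{u}) : Prop :=
  κ.IsOrdinal ∧ ∀ x ∈ κ, zcard x < zcard κ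

/-- The collection `H(θ)` of sets hereditarily of cardinality less than `θ`. -/
def HZ (θ : ZFSet.{u}) : Set ZFSet.{u} :=
  {x | ZFSet.Hereditarily (fun y => zcard y < zcard θ) x}

/-- The collection `H(κ⁺)` of sets hereditarily of cardinality at most `κ`. -/
def Hplus (κ : ZFSet.{u}) : Set ZFSet.{u} :=
  {x | ZFSet.Hereditarily (fun y => zcard y ≤ zcard κ) x}

/-- `f` codes a bijection from `a` onto `b`. -/
def IsBijZ (a b f : ZFSet.{u}) : Prop :=
  ZFSet.IsFunc a b f ∧ (∀ x₁ x₂ y, ZFSet.pair x₁ y ∈ f → ZFSet.pair x₂ y ∈ f → x₁ = x₂) ∧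
    ∀ y ∈ b, ∃ x, ZFSet.pair x y ∈ f

/-- `f` codes an injection from `a` into `b`. -/
def IsInjZ (a b f : ZFSet.{u}) : Prop :=
  ZFSet.IsFunc a b f ∧ ∀ x₁ x₂ y, ZFSet.pair x₁ y ∈ f → ZFSet.pair x₂ y ∈ f → x₁ = x₂

-- Part C : models
/-- A weak `κ`-model: a set `M` of size `κ` with `κ + 1 ⊆ M` satisfying `ZFC⁻`. -/
def WeakModelZ (κ : ZFSet.{u}) (M : Set ZFSet.{u}) : Prop :=
  Cardinal.mk ↥M = zcard κ ∧ insert κ κ.toSet ⊆ M ∧ (↥M ⊨ ZFCminus)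

/-- `M` is closed under `<α`-sequences (of sets, with domains ordinals `< α`). -/
def LtClosed (α : ZFSet.{u}) (M : Set ZFSet.{u}) : Prop :=
  ∀ δ y f : ZFSet, δ ∈ α → y.toSet ⊆ M → ZFSet.IsFunc δ y f → f ∈ M

/-- A `κ`-model: a weak `κ`-model closed under `<κ`-sequences. -/
def KappaModelZ (κ : ZFSet.{u}) (M : Set ZFSet.{u}) : Prop :=
  WeakModelZ κ M ∧ LtClosed κ M

/-- `j : S → T` has critical point `κ`. -/
def CritAt (S T : Set ZFSet.{u}) (j : ↥S → ↥T) (κ : ZFSet.{u}) : Prop :=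
  ∃ hκ : κ ∈ S, (∀ x : ↥S, (x : ZFSet) ∈ κ → ((j x : ZFSet) = (x : ZFSet))) ∧
    (j ⟨κ, hκ⟩ : ZFSet) ≠ κ

/-- `j : S → T` is `κ`-powerset preserving: it has critical point `κ` and `S` and `T`
have the same subsets of `κ`. -/
def PPres (κ : ZFSet.{u}) (S T : Set ZFSet.{u}) (j : ↥S → ↥T) : Prop :=
  CritAt S T j κ ∧ ∀ A : ZFSet, A ⊆ κ → (A ∈ S ↔ A ∈ T)

-- Part D : filters
/-- A filter on `κ` (in the sense of Holy–Schlicht): a collection of subsets of `κ` all of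
whose finite intersections have cardinality `κ`. -/
def IsZFilter (κ : ZFSet.{u}) (F : Set ZFSet.{u}) : Prop :=
  (∀ A ∈ F, A ⊆ κ) ∧ ∀ (n : ℕ) (A : Fin n → ZFSet),
    (∀ i, A i ∈ F) → Cardinal.mk ↥(κ.toSet ∩ ⋂ i, (A i).toSet) = zcard κ

/-- The diagonal intersection of a `κ`-sequence of subsets of `κ` coded by the
set-function `m`. -/
noncomputable def diagZ (κ m : ZFSet.{u}) : ZFSet.{u} :=
  ZFSet.sep (fun b => ∀ a v, a ∈ b → ZFSet.pair a v ∈ m → b ∈ v) κ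

/-- `m` codes a `κ`-sequence of elements of `F`. -/
def CodesFilterSeq (κ : ZFSet.{u}) (F : Set ZFSet.{u}) (m : ZFSet.{u}) : Prop :=
  (∃ y, ZFSet.IsFunc κ y m) ∧ ∀ b v, b ∈ κ → ZFSet.pair b v ∈ m → v ∈ F

/-- `F` is an `M`-normal filter on `κ`: it measures `P(κ) ∩ M` and is closed under
diagonal intersections of `κ`-sequences of its elements lying in `M`. -/
def MNormalZ (κ : ZFSet.{u}) (F : Set ZFSet.{u}) (M : Set ZFSet.{u}) : Prop :=
  IsZFilter κ F ∧ (∀ A : ZFSet, A ∈ M → A ⊆ κ → (A ∈ F ∨ (κ \ A) ∈ F)) ∧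
    ∀ m ∈ M, CodesFilterSeq κ F m → diagZ κ m ∈ F

/-- `U` is weakly amenable for `M`: traces of `U` on `κ`-sized elements of `M` are in `M`. -/
def WeaklyAmenableZ (κ : ZFSet.{u}) (M : Set ZFSet.{u}) (U : Set ZFSet.{u}) : Prop :=
  ∀ A : ZFSet, A ∈ M → zcard A ≤ zcard κ →
    ∃ B ∈ M, ∀ z : ZFSet, z ∈ B ↔ (z ∈ A ∧ z ∈ U)

/-- The domain of the ultrapower of `M` by a filter on `κ`: functions with domain `κ`
lying in `M`. -/
def UltFn (κ : ZFSet.{u}) (M : Set ZFSet.{u}) : Set ZFSet.{u} :=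
  {f | f ∈ M ∧ ∃ y, ZFSet.IsFunc κ y f}

/-- The membership relation of the ultrapower of `M` by `U`. -/
noncomputable def UltMem (κ : ZFSet.{u}) (U : Set ZFSet.{u}) (f g : ZFSet.{u}) : Prop :=
  ZFSet.sep (fun a => ∃ v w, ZFSet.pair a v ∈ f ∧ ZFSet.pair a w ∈ g ∧ v ∈ w) κ ∈ U

/-- The ultrapower of `M` by `U` is well-founded. -/
noncomputable def WellFoundedUlt (κ : ZFSet.{u}) (M : Set ZFSet.{u}) (U : Set ZFSet.{u}) : Prop :=
  WellFounded (fun f g : ↥(UltFn κ M) => UltMem κ U (f : ZFSet) (g : ZFSet))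
-- Part E : the filter games G_γ^θ(κ)
/-- `m` codes the sequence `⟨g b | b ∈ d⟩` of `κ`-sized collections of sets. -/
def CodesSetSeq (m d : ZFSet.{u}) (g : ZFSet.{u} → Set ZFSet.{u}) : Prop :=
  (∃ y, ZFSet.IsFunc d y m) ∧ ∀ b v, b ∈ d → ZFSet.pair b v ∈ m → v.toSet = g b

open Classical in
/-- The restriction of a play to the moves of index `< i`. -/
noncomputable def restrLt (g : ZFSet.{u} → Set ZFSet.{u}) (i : ZFSet.{u}) :
    ZFSet.{u} → Set ZFSet.{u} :=
  fun b => if b ∈ i then g b else ∅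

open Classical in
/-- The restriction of a play to the moves of index `≤ i`. -/
noncomputable def restrLe (g : ZFSet.{u} → Set ZFSet.{u}) (i : ZFSet.{u}) :
    ZFSet.{u} → Set ZFSet.{u} :=
  fun b => if (b ∈ i ∨ b = i) then g b else ∅

/-- The challenger's move at stage `i` of `G_γ^θ(κ)` is legal: he plays a `κ`-model
`M_i ≺ H(θ)` containing (codes for) the sequences of previous models and filter traces,
increasing the chain of models. -/
def ChalLegalAt (κ θ : ZFSet.{u}) (Ms Fs : ZFSet.{u} → Set ZFSet.{u}) (i : ZFSet.{u}) : Prop :=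
  (∀ j, j ∈ i → Ms j ⊆ Ms i) ∧ KappaModelZ κ (Ms i) ∧ ElemSub (Ms i) (HZ θ) ∧
    (∃ m ∈ Ms i, CodesSetSeq m i Ms) ∧
    (∃ f ∈ Ms i, CodesSetSeq f i (fun b => Fs b ∩ Ms b))

/-- The judge's move at stage `i` of `G_γ^θ(κ)` is legal: she plays a filter `F_i` on `κ`
measuring `P(κ) ∩ M_i` and extending her previous filters. -/
def JudgeLegalAt (κ : ZFSet.{u}) (Ms Fs : ZFSet.{u} → Set ZFSet.{u}) (i : ZFSet.{u}) : Prop :=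
  IsZFilter κ (Fs i) ∧ (∀ A : ZFSet, A ∈ Ms i → A ⊆ κ → (A ∈ Fs i ∨ (κ \ A) ∈ Fs i)) ∧
    ∀ j, j ∈ i → Fs j ⊆ Fs i

/-- The winning condition for the judge in `G_γ^θ(κ)`: the union of the filters played is
normal for the union of the models played. -/
def JudgeWinsRun (κ γ : ZFSet.{u}) (Ms Fs : ZFSet.{u} → Set ZFSet.{u}) : Prop :=
  MNormalZ κ (⋃ i ∈ γ.toSet, Fs i) (⋃ i ∈ γ.toSet, Ms i)

/-- `σ` is a winning strategy for the challenger in the game `G_γ^θ(κ)`. -/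
noncomputable def ChalWS (κ θ γ : ZFSet.{u})
    (σ : ZFSet.{u} → (ZFSet.{u} → Set ZFSet.{u}) → Set ZFSet.{u}) : Prop :=
  ∀ Fs : ZFSet.{u} → Set ZFSet.{u},
    (∀ i ∈ γ.toSet, (∀ j, j ∈ i → JudgeLegalAt κ (fun b => σ b (restrLt Fs b)) Fs j) →
      ChalLegalAt κ θ (fun b => σ b (restrLt Fs b)) Fs i) ∧
    ((∀ i ∈ γ.toSet, JudgeLegalAt κ (fun b => σ b (restrLt Fs b)) Fs i) →
      ¬ JudgeWinsRun κ γ (fun b => σ b (restrLt Fs b)) Fs)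

/-- `τ` is a winning strategy for the judge in the game `G_γ^θ(κ)`. -/
noncomputable def JudgeWS (κ θ γ : ZFSet.{u})
    (τ : ZFSet.{u} → (ZFSet.{u} → Set ZFSet.{u}) → Set ZFSet.{u}) : Prop :=
  ∀ Ms : ZFSet.{u} → Set ZFSet.{u},
    (∀ i ∈ γ.toSet,
      (∀ j, (j ∈ i ∨ j = i) → ChalLegalAt κ θ Ms (fun b => τ b (restrLe Ms b)) j) →
      JudgeLegalAt κ Ms (fun b => τ b (restrLe Ms b)) i) ∧
    ((∀ i ∈ γ.toSet, ChalLegalAt κ θ Ms (fun b => τ b (restrLe Ms b)) i) →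
      JudgeWinsRun κ γ Ms (fun b => τ b (restrLe Ms b)))

/-- `κ` has the `γ`-filter property: for every regular `θ > κ`, the challenger has no
winning strategy in `G_γ^θ(κ)`. -/
noncomputable def FilterPropZ (κ γ : ZFSet.{u}) : Prop :=
  ∀ θ : ZFSet.{u}, IsRegCard θ → κ ∈ θ → ¬ ∃ σ, ChalWS κ θ γ σ

/-- `κ` has the strategic `γ`-filter property: for every regular `θ > κ`, the judge has a
winning strategy in `G_γ^θ(κ)`. -/
noncomputable def StratFilterPropZ (κ γ : ZFSet.{u}) : Prop :=
  ∀ θ : ZFSet.{u}, IsRegCard θ → κ ∈ θ → ∃ τ, JudgeWS κ θ γ τ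

/-- `κ` is `α`-Ramsey (Holy–Schlicht, Definition 5.1): for arbitrarily large regular
cardinals `θ`, every `A ⊆ κ` is contained, as an element, in some weak `κ`-model
`M ≺ H(θ)` closed under `<α`-sequences, for which there exists a `κ`-powerset preserving
elementary embedding `j : M → N`. -/
def AlphaRamseyZ (α κ : ZFSet.{u}) : Prop :=
  ∀ η : ZFSet.{u}, ∃ θ : ZFSet.{u}, η ∈ θ ∧ IsRegCard θ ∧ ∀ A : ZFSet, A ⊆ κ →
    ∃ M : Set ZFSet.{u}, A ∈ M ∧ WeakModelZ κ M ∧ LtClosed α M ∧ ElemSub M (HZ θ) ∧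
      ∃ (N : Set ZFSet.{u}) (j : ↥M → ↥N), ElemEmbOf M N j ∧ PPres κ M N j

/-- `κ` is a measurable cardinal: there is a `<κ`-complete nonprincipal ultrafilter on `κ`. -/
def MeasurableZ (κ : ZFSet.{u}) : Prop :=
  ∃ U : Set ZFSet.{u},
    (∀ A ∈ U, A ⊆ κ) ∧ (∅ : ZFSet.{u}) ∉ U ∧
    (∀ A : ZFSet.{u}, A ⊆ κ → (A ∈ U ∨ (κ \ A) ∈ U)) ∧
    (∀ s : ZFSet.{u}, s.toSet ⊆ U → zcard s < zcard κ →
      ∃ B ∈ U, ∀ z : ZFSet, z ∈ B ↔ (z ∈ κ ∧ ∀ A, A ∈ s → z ∈ A)) ∧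
    (∀ a, a ∈ κ → ∃ A ∈ U, a ∉ A)

/-!
If `κ` is measurable, it carries a normal ultrafilter, the image of a `κ`-complete one under a
function that is least among those exceeding every constant almost everywhere; the judge wins by
always playing this ultrafilter. A winning strategy for the judge, played against any strategy of
the challenger, defeats it.

Suppose that the challenger has no winning strategy. Since `κ^{<κ} = κ`, every subset of `H(θ)` of
size at most `κ` is contained in some `κ`-model `M ≺ H(θ)`. As `2^κ = κ⁺`, a challenger playing such
models can bookkeep through all subsets of `κ` and all `κ`-sequences of them in `κ⁺` moves. This is
not a winning strategy, so the judge wins some run. The union of her filters is then closed under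
all diagonal intersections and measures every subset of `κ`, so it is a `κ`-complete nonprincipal
ultrafilter.
-/

section Codes

open Cardinal

instance small_toSet (x : ZFSet.{u}) : Small.{u} x.toSet :=
  ZFSet.small_coe x

/-- The set with the given collection of elements; a junk value if that collection is a proper
class. -/
noncomputable def setCode : Set ZFSet.{u} → ZFSet.{u} :=
  Function.invFun ZFSet.toSet

@[simp]
theorem toSet_setCode (Y : Set ZFSet.{u}) [Small.{u} Y] : (setCode Y).toSet = Y :=
  Function.invFun_eq ⟨ZFSet.range (Subtype.val : Y → ZFSet),
    (ZFSet.coe_range _).trans Subtype.range_coe⟩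

@[simp]
theorem mem_toSet {x y : ZFSet.{u}} : x ∈ y.toSet ↔ x ∈ y :=
  Iff.rfl

theorem zcard_eq_lift_card (x : ZFSet.{u}) : zcard x = lift.{u + 1} x.card :=
  ZFSet.cardinalMk_coe_sort

theorem zcard_mono {x y : ZFSet.{u}} (h : x ⊆ y) : zcard x ≤ zcard y :=
  mk_le_mk_of_subset h

theorem zcard_range_le {α : Type (u + 1)} [Small.{u} α] (f : α → ZFSet.{u}) :
    zcard (ZFSet.range f) ≤ #α :=
  (mk_congr (Equiv.setCongr (ZFSet.coe_range f))).trans_le mk_range_le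

variable {d y f b v : ZFSet.{u}} {g : d.toSet → ZFSet.{u}}

/-- The function on `d` with values `g`, as a set of ordered pairs. -/
noncomputable def graph (d : ZFSet.{u}) (g : d.toSet → ZFSet.{u}) : ZFSet.{u} :=
  ZFSet.range fun b : d.toSet => ZFSet.pair b (g b)

theorem pair_mem_graph : ZFSet.pair b v ∈ graph d g ↔ ∃ hb : b ∈ d, g ⟨b, hb⟩ = v := by
  simp only [graph, ZFSet.mem_range, ZFSet.pair_inj, Subtype.exists]
  exact ⟨fun ⟨_, hb, h, hv⟩ => by subst h; exact ⟨hb, hv⟩, fun ⟨hb, hv⟩ => ⟨b, hb, rfl, hv⟩⟩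

theorem isFunc_graph (hg : ∀ b, g b ∈ y) : ZFSet.IsFunc d y (graph d g) := by
  refine ⟨fun z hz => ?_, fun b hb => ⟨g ⟨b, hb⟩, pair_mem_graph.2 ⟨hb, rfl⟩, fun v hv => ?_⟩⟩
  · obtain ⟨b, rfl⟩ := ZFSet.mem_range.1 hz
    exact ZFSet.pair_mem_prod.2 ⟨b.2, hg b⟩
  · exact (pair_mem_graph.1 hv).choose_spec.symm

theorem exists_isFunc_graph (g : d.toSet → ZFSet.{u}) : ∃ y, ZFSet.IsFunc d y (graph d g) :=
  ⟨_, isFunc_graph fun b => ZFSet.mem_range_self (f := g) b⟩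

theorem exists_eq_graph (hf : ZFSet.IsFunc d y f) :
    ∃ g : d.toSet → ZFSet.{u}, (∀ b, g b ∈ y) ∧ f = graph d g := by
  choose g hg hg' using fun b : d.toSet => hf.2 b b.2
  refine ⟨g, fun b => (ZFSet.pair_mem_prod.1 (hf.1 (hg b))).2,
    ZFSet.ext fun z => ⟨fun hz => ?_, ?_⟩⟩
  · obtain ⟨b, hb, v, -, rfl⟩ := ZFSet.mem_prod.1 (hf.1 hz)
    exact pair_mem_graph.2 ⟨hb, (hg' ⟨b, hb⟩ v hz).symm⟩
  · intro hz
    obtain ⟨b, rfl⟩ := ZFSet.mem_range.1 hz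
    exact hg b

theorem mk_isFunc_le (d : ZFSet.{u}) (Y : Set ZFSet.{u}) :
    #{f | ∃ y : ZFSet, y.toSet ⊆ Y ∧ ZFSet.IsFunc d y f} ≤ #Y ^ zcard d := by
  have hsub : {f | ∃ y : ZFSet, y.toSet ⊆ Y ∧ ZFSet.IsFunc d y f} ⊆
      Set.range fun g : d.toSet → Y => graph d fun b => (g b : ZFSet) := by
    rintro f ⟨y, hy, hf⟩
    obtain ⟨g, hg, rfl⟩ := exists_eq_graph hf
    exact ⟨fun b => ⟨g b, hy (hg b)⟩, rfl⟩
  exact (mk_le_mk_of_subset hsub).trans (mk_range_le.trans_eq (power_def _ _).symm)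

end Codes

section NormalUltrafilters

open Cardinal Filter

variable {α : Type u} {c : Cardinal.{u}}

/-- A filter on an ordered type is normal if it is closed under diagonal intersections. -/
def IsNormalFilter [LT α] (l : Filter α) : Prop :=
  ∀ p : α → α → Prop, (∀ a, ∀ᶠ b in l, p a b) → ∀ᶠ b in l, ∀ a < b, p a b

/-- In the ultrapower by `l`, the class of `f` is the least element that lies above all constants:
the value at which the ultrapower embedding has its critical point. -/
def IsLeastAboveConstants {β : Type*} [LT β] (l : Filter α) (f : α → β) : Prop :=
  (∀ b, ∀ᶠ x in l, b < f x) ∧ ∀ g : α → β, (∀ᶠ x in l, g x < f x) → ∃ b, ∀ᶠ x in l, g x = b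

theorem eventually_notMem_of_mk_lt {l : Filter α} [CardinalInterFilter l c] {s : Set α}
    (hs : #s < c) (h : ∀ a ∈ s, ∀ᶠ x in l, x ≠ a) : ∀ᶠ x in l, x ∉ s := by
  filter_upwards [(eventually_cardinal_ball hs).2 h] with x hx hxs using hx x hxs rfl

theorem wellFounded_eventually_lt {α β : Type*} [Preorder β] [WellFoundedLT β] (l : Filter α)
    [l.NeBot] [CountableInterFilter l] :
    WellFounded fun f g : α → β => ∀ᶠ x in l, f x < g x := by
  rw [wellFounded_iff_isEmpty_descending_chain]
  refine ⟨fun ⟨f, hf⟩ => ?_⟩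
  obtain ⟨x, hx⟩ := (eventually_countable_forall.2 hf).exists
  exact (wellFounded_iff_isEmpty_descending_chain.1 (wellFounded_lt (α := β))).false
    ⟨fun n => f n x, hx⟩

theorem IsLeastAboveConstants.isNormalFilter_map {β : Type*} [LT β] {V : Ultrafilter α}
    {f : α → β} (hf : IsLeastAboveConstants (V : Filter α) f) :
    IsNormalFilter (map f (V : Filter α)) := by
  intro p hp
  by_contra hdiag
  rw [eventually_map, ← Ultrafilter.eventually_not] at hdiag
  push Not at hdiag
  obtain ⟨g, hg⟩ := hdiag.choice
  obtain ⟨b, hb⟩ := hf.2 g (hg.mono fun _ => And.left)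
  obtain ⟨x, ⟨hx, rfl⟩, hpx⟩ := ((hg.and hb).and (eventually_map.1 (hp b))).exists
  exact hx.2 hpx

variable [LinearOrder α]

theorem eventually_lt_of_forall_ne {l : Filter α} [CardinalInterFilter l c]
    (hc : ∀ a : α, #(Set.Iio a) < c) (h : ∀ a, ∀ᶠ x in l, x ≠ a) (a : α) : ∀ᶠ x in l, a < x := by
  filter_upwards [h a, eventually_notMem_of_mk_lt (hc a) fun b _ => h b] with x hne hlt
  exact (not_lt.1 hlt).lt_of_ne hne.symm

theorem exists_isLeastAboveConstants [WellFoundedLT α] (V : Ultrafilter α)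
    [CardinalInterFilter (V : Filter α) c] (hc₀ : ℵ₀ < c) (hc : ∀ a : α, #(Set.Iio a) < c)
    (h : ∀ a, ∀ᶠ x in (V : Filter α), x ≠ a) :
    ∃ f : α → α, IsLeastAboveConstants (V : Filter α) f := by
  have : CountableInterFilter (V : Filter α) := CardinalInterFilter.toCountableInterFilter _ hc₀
  obtain ⟨f, hf, hmin⟩ := (wellFounded_eventually_lt (β := α) (V : Filter α)).has_min
    {f | ∀ a, ∀ᶠ x in (V : Filter α), a < f x} ⟨id, eventually_lt_of_forall_ne hc h⟩
  refine ⟨f, hf, fun g hgf => ?_⟩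
  by_contra! hg
  exact hmin g (eventually_lt_of_forall_ne (l := map g V) hc hg) hgf

theorem exists_ultrafilter_isNormalFilter [WellFoundedLT α] (hα : ℵ₀ < #α)
    (hIio : ∀ a : α, #(Set.Iio a) < #α) (V : Ultrafilter α)
    [CardinalInterFilter (V : Filter α) #α] (hV : ∀ a, ∀ᶠ x in (V : Filter α), x ≠ a) :
    ∃ W : Ultrafilter α, IsNormalFilter (W : Filter α) ∧ ∀ s ∈ W, #s = #α := by
  obtain ⟨f, hf⟩ := exists_isLeastAboveConstants V hα hIio hV
  refine ⟨V.map f, hf.isNormalFilter_map, fun s hs => (mk_set_le s).eq_of_not_lt fun hlt => ?_⟩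
  have hs' : ∀ᶠ x in map f V, x ∉ s :=
    eventually_notMem_of_mk_lt hlt fun a _ => (hf.1 a).mono fun _ => ne_of_gt
  obtain ⟨x, hx, hx'⟩ := (hs'.and hs).exists
  exact hx hx'

end NormalUltrafilters

section Measurable

open Cardinal Filter

variable {κ : ZFSet.{u}}

theorem MeasurableZ.exists_ultrafilter (hκ : 2 < zcard κ) (h : MeasurableZ κ) :
    ∃ V : Ultrafilter κ.toSet, CardinalInterFilter (V : Filter κ.toSet) (zcard κ) ∧
      ∀ a, ∀ᶠ x in (V : Filter κ.toSet), x ≠ a := by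
  obtain ⟨U, hsub, hempty, hultra, hinter, hnonprincipal⟩ := h
  let l : Filter κ.toSet := ofCardinalInter {s | ∃ A ∈ U, Subtype.val ⁻¹' A.toSet ⊆ s} hκ
    (by
      intro S hS hSU
      choose A hAU hA using fun s : S => hSU s.2
      obtain ⟨B, hBU, hB⟩ := hinter (ZFSet.range A)
        (fun z hz => by
          obtain ⟨s, rfl⟩ := ZFSet.mem_range.1 hz
          exact hAU s)
        (lt_of_le_of_lt (zcard_range_le A) hS)
      refine ⟨B, hBU, fun x hx s hs => hA ⟨s, hs⟩ ?_⟩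
      exact ((hB x).1 hx).2 _ (ZFSet.mem_range.2 ⟨⟨s, hs⟩, rfl⟩))
    (fun s t ⟨A, hA, hAs⟩ hst => ⟨A, hA, hAs.trans hst⟩)
  have : l.NeBot := by
    refine ⟨fun hbot => ?_⟩
    obtain ⟨A, hA, hA'⟩ : ∅ ∈ l := hbot ▸ mem_bot
    have : A = ∅ := (ZFSet.eq_empty A).2 fun z hz => hA' (a := ⟨z, hsub A hA hz⟩) hz
    exact hempty (this ▸ hA)
  have hl (s : Set κ.toSet) : s ∈ l ∨ sᶜ ∈ l := by
    have hmem (x : κ.toSet) : x.1 ∈ setCode (Subtype.val '' s) ↔ x ∈ s := by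
      change x.1 ∈ (setCode _).toSet ↔ _
      simp
    refine (hultra (setCode (Subtype.val '' s)) fun z hz => ?_).imp
      (fun h => ⟨_, h, fun x hx => (hmem x).1 hx⟩)
      (fun h => ⟨_, h, fun x hx hxs => (ZFSet.mem_sdiff.1 hx).2 ((hmem x).2 hxs)⟩)
    obtain ⟨x, -, rfl⟩ := (toSet_setCode _).subset hz
    exact x.2
  refine ⟨.ofComplNotMemIff l fun s => ⟨(hl s).resolve_right, fun hs hs' => compl_notMem hs hs'⟩,
    inferInstanceAs (CardinalInterFilter l _), fun a => ?_⟩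
  obtain ⟨A, hA, haA⟩ := hnonprincipal a a.2
  exact ⟨A, hA, fun x hx hxa => haA (hxa ▸ hx)⟩

theorem lt_iff_mem_of_isOrdinal (hκ : κ.IsOrdinal) {a b : κ.toSet} : a < b ↔ a.1 ∈ b.1 := by
  have hb := hκ.mem b.2
  rw [← Subtype.coe_lt_coe, lt_iff_le_not_ge]
  exact (and_congr_right' (hb.not_subset_iff_mem (hκ.mem a.2))).trans
    (and_iff_right_of_imp hb.subset_of_mem)

theorem MeasurableZ.exists_isNormalFilter (hκ : IsCardZ κ) (hunc : ℵ₀ < zcard κ)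
    (h : MeasurableZ κ) :
    ∃ W : Ultrafilter κ.toSet, IsNormalFilter (W : Filter κ.toSet) ∧ ∀ s ∈ W, #s = zcard κ := by
  let : LinearOrder κ.toSet :=
    { (inferInstance : PartialOrder κ.toSet) with
      le_total := fun a b => (hκ.1.mem a.2).subset_total (hκ.1.mem b.2)
      toDecidableLE := Classical.decRel _ }
  have hlt {a b : κ.toSet} : a < b ↔ a.1 ∈ b.1 := lt_iff_mem_of_isOrdinal hκ.1
  have : WellFoundedLT κ.toSet :=
    ⟨Subrelation.wf (fun h => hlt.1 h) (InvImage.wf Subtype.val ZFSet.mem_wf)⟩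
  have hIio (a : κ.toSet) : #(Set.Iio a) < #κ.toSet :=
    (mk_le_of_injective (f := fun x : Set.Iio a => (⟨x.1.1, hlt.1 x.2⟩ : a.1.toSet))
      fun x y h => by simpa [Subtype.ext_iff] using h).trans_lt (hκ.2 a a.2)
  obtain ⟨V, hV, hne⟩ := h.exists_ultrafilter ((natCast_lt_aleph0 (n := 2)).trans hunc)
  have : CardinalInterFilter (V : Filter κ.toSet) #κ.toSet := hV
  exact exists_ultrafilter_isNormalFilter hunc hIio V hne

theorem IsNormalFilter.mNormalZ {W : Ultrafilter κ.toSet}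
    (hW : IsNormalFilter (W : Filter κ.toSet)) (hκ : κ.IsOrdinal)
    (hcard : ∀ s ∈ W, #s = zcard κ) :
    MNormalZ κ {A | A ⊆ κ ∧ Subtype.val ⁻¹' A.toSet ∈ W} Set.univ := by
  refine ⟨⟨fun A hA => hA.1, fun n A hA => ?_⟩, fun A _ hA => ?_, ?_⟩
  · rw [← Subtype.image_preimage_coe, mk_image_eq Subtype.val_injective]
    refine hcard _ ?_
    rw [Set.preimage_iInter]
    exact iInter_mem.2 fun i => (hA i).2
  · refine (W.em (·.1 ∈ A)).imp (fun h => ⟨hA, h⟩) fun h => ⟨fun z hz => ?_, ?_⟩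
    · exact (ZFSet.mem_sdiff.1 hz).1
    · exact h.mono fun x hx => ZFSet.mem_sdiff.2 ⟨x.2, hx⟩
  · rintro m - ⟨⟨y, hm⟩, hmF⟩
    refine ⟨ZFSet.sep_subset, ?_⟩
    have hdiag := hW (fun a b => ∀ v, ZFSet.pair a v ∈ m → b.1 ∈ v) fun a => by
      obtain ⟨v, hv, hv'⟩ := hm.2 a a.2
      filter_upwards [(hmF a v a.2 hv).2] with b hb w hw
      rwa [hv' w hw]
    refine hdiag.mono fun b hb => ZFSet.mem_sep.2 ⟨b.2, fun a v hab => ?_⟩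
    exact hb ⟨a, hκ.mem_trans hab b.2⟩ ((lt_iff_mem_of_isOrdinal hκ).2 hab) v

theorem MeasurableZ.exists_mNormalZ (hκ : IsCardZ κ) (hunc : ℵ₀ < zcard κ)
    (h : MeasurableZ κ) : ∃ W, MNormalZ κ W Set.univ := by
  obtain ⟨W, hW, hcard⟩ := h.exists_isNormalFilter hκ hunc
  exact ⟨_, hW.mNormalZ hκ.1 hcard⟩

variable {F M : Set ZFSet.{u}} {A B s : ZFSet.{u}}

theorem IsZFilter.zcard_inter (hF : IsZFilter κ F) (hA : A ∈ F) (hB : B ∈ F) :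
    zcard (A ∩ B) = zcard κ := by
  rw [← hF.2 2 ![A, B] (Fin.forall_fin_two.2 ⟨hA, hB⟩), zcard]
  congr 2
  ext z
  simpa [Fin.forall_fin_two] using fun h _ => hF.1 A hA h

theorem IsZFilter.zcard_eq (hF : IsZFilter κ F) (hA : A ∈ F) : zcard A = zcard κ := by
  rw [← hF.zcard_inter hA hA]
  congr 1
  ext z
  simp

theorem IsZFilter.empty_notMem (hF : IsZFilter κ F) (hκ : 0 < zcard κ) : ∅ ∉ F :=
  fun h => hκ.ne (by rw [← hF.zcard_eq h, zcard_eq_lift_card]; simp)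

theorem exists_mem_zcard_eq (hκ : κ.IsOrdinal) (hs : zcard s < zcard κ) :
    ∃ i ∈ κ, zcard i = zcard s := by
  simp only [zcard_eq_lift_card, lift_lt, lift_inj] at hs ⊢
  rw [← hκ.toZFSet_rank_eq] at hs ⊢
  rw [Ordinal.card_toZFSet] at hs
  refine ⟨s.card.ord.toZFSet, Ordinal.toZFSet_mem_toZFSet_iff.2 ?_, by simp⟩
  exact lt_of_not_ge fun h => hs.not_ge (by simpa using Ordinal.card_le_card h)

theorem MNormalZ.mem_or_sdiff_mem (hF : MNormalZ κ F M)
    (hM : (κ.powerset ∪ κ.funs κ.powerset).toSet ⊆ M) (hA : A ⊆ κ) : A ∈ F ∨ κ \ A ∈ F :=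
  hF.2.1 A (hM (ZFSet.mem_union.2 (.inl (ZFSet.mem_powerset.2 hA)))) hA

theorem MNormalZ.self_mem (hF : MNormalZ κ F M)
    (hM : (κ.powerset ∪ κ.funs κ.powerset).toSet ⊆ M) (hκ : 0 < zcard κ) : κ ∈ F := by
  refine (hF.mem_or_sdiff_mem hM subset_rfl).resolve_right fun h => hF.1.empty_notMem hκ ?_
  convert h
  ext z
  simp

theorem MNormalZ.diagZ_graph_mem (hF : MNormalZ κ F M)
    (hM : (κ.powerset ∪ κ.funs κ.powerset).toSet ⊆ M) {g : κ.toSet → ZFSet.{u}}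
    (hg : ∀ a, g a ∈ F) : diagZ κ (graph κ g) ∈ F := by
  refine hF.2.2 _ (hM (ZFSet.mem_union.2 (.inr (ZFSet.mem_funs.2 ?_)))) ⟨exists_isFunc_graph g, ?_⟩
  · exact isFunc_graph fun a => ZFSet.mem_powerset.2 (hF.1.1 _ (hg a))
  · intro b v _ hv
    obtain ⟨hb, rfl⟩ := pair_mem_graph.1 hv
    exact hg _

/-- Enumerating `s` along an ordinal `i ∈ κ`, the diagonal intersection agrees with the
intersection of `s` above `i`. -/
theorem MNormalZ.sep_forall_mem (hF : MNormalZ κ F M) (hκ : IsCardZ κ)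
    (hM : (κ.powerset ∪ κ.funs κ.powerset).toSet ⊆ M) (hs : s.toSet ⊆ F)
    (hsκ : zcard s < zcard κ) : ZFSet.sep (fun z => ∀ A ∈ s, z ∈ A) κ ∈ F := by
  classical
  obtain ⟨i, hi, his⟩ := exists_mem_zcard_eq hκ.1 hsκ
  obtain ⟨e⟩ := Cardinal.eq.1 his
  let g (a : κ.toSet) : ZFSet.{u} := if ha : a.1 ∈ i then e ⟨a, ha⟩ else κ
  have hg (a : κ.toSet) : g a ∈ F := by
    by_cases ha : a.1 ∈ i
    · simpa only [g, dif_pos ha] using hs (e ⟨a, ha⟩).2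
    · simpa only [g, dif_neg ha] using hF.self_mem hM (bot_le.trans_lt hsκ)
  refine (hF.mem_or_sdiff_mem hM ZFSet.sep_subset).resolve_right fun hdiff => ?_
  have hsub : diagZ κ (graph κ g) ∩ (κ \ ZFSet.sep (fun z => ∀ A ∈ s, z ∈ A) κ) ⊆ i := by
    intro b hb
    rw [ZFSet.mem_inter, ZFSet.mem_sdiff, diagZ, ZFSet.mem_sep, ZFSet.mem_sep] at hb
    obtain ⟨⟨-, hdiag⟩, hbκ, hbs⟩ := hb
    by_contra hbi
    have hib : i ⊆ b := ((hκ.1.mem hbκ).notMem_iff_subset (hκ.1.mem hi)).1 hbi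
    refine hbs ⟨hbκ, fun A hA => ?_⟩
    obtain ⟨⟨a, ha⟩, hea⟩ := e.surjective ⟨A, hA⟩
    refine hdiag a A (hib ha) (pair_mem_graph.2 ⟨hκ.1.mem_trans ha hi, ?_⟩)
    exact (dif_pos (show a ∈ i from ha)).trans (congrArg Subtype.val hea)
  exact ((zcard_mono hsub).trans_lt (hκ.2 i hi)).ne
    (hF.1.zcard_inter (hF.diagZ_graph_mem hM hg) hdiff)

theorem MNormalZ.measurableZ (hF : MNormalZ κ F M) (hκ : IsCardZ κ) (hone : 1 < zcard κ)
    (hM : (κ.powerset ∪ κ.funs κ.powerset).toSet ⊆ M) : MeasurableZ κ := by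
  refine ⟨F, hF.1.1, fun h => ?_, fun A hA => hF.mem_or_sdiff_mem hM hA, fun s hs hsκ => ?_,
    fun a ha => ?_⟩
  · exact hF.1.empty_notMem (one_pos.trans hone) h
  · exact ⟨_, hF.sep_forall_mem hκ hM hs hsκ, fun z => ZFSet.mem_sep⟩
  · have ha' : {a} ∉ F := fun h => hone.ne (by rw [← hF.1.zcard_eq h, zcard_eq_lift_card]; simp)
    refine ⟨κ \ {a}, (hF.mem_or_sdiff_mem hM ?_).resolve_left ha', by simp⟩
    simpa [ZFSet.subset_def]

end Measurable

section Strategies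

variable {κ γ : ZFSet.{u}}

theorem MNormalZ.mono {F M N : Set ZFSet.{u}} (hF : MNormalZ κ F N) (h : M ⊆ N) :
    MNormalZ κ F M :=
  ⟨hF.1, fun A hA => hF.2.1 A (h hA), fun m hm => hF.2.2 m (h hm)⟩

theorem MeasurableZ.stratFilterPropZ (h : MeasurableZ κ) (hκ : IsCardZ κ)
    (hunc : Cardinal.aleph0 < zcard κ) (hγ : γ.toSet.Nonempty) : StratFilterPropZ κ γ := by
  obtain ⟨W, hW⟩ := h.exists_mNormalZ hκ hunc
  refine fun θ _ _ => ⟨fun _ _ => W, fun Ms => ⟨fun i _ _ => ?_, fun _ => ?_⟩⟩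
  · exact ⟨hW.1, fun A _ => hW.2.1 A (Set.mem_univ A), fun _ _ => subset_rfl⟩
  · rw [JudgeWinsRun, Set.biUnion_const hγ]
    exact hW.mono (Set.subset_univ _)

open Classical in
/-- The judge's moves in the run in which the challenger follows `σ` and the judge follows `τ`. -/
noncomputable def judgeMoves (σ τ : ZFSet.{u} → (ZFSet.{u} → Set ZFSet.{u}) → Set ZFSet.{u})
    (i : ZFSet.{u}) : Set ZFSet.{u} :=
  τ i fun b => if _ : b ∈ i ∨ b = i then
    σ b fun c => if _ : c ∈ b then judgeMoves σ τ c else ∅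
  else ∅
termination_by i.rank
decreasing_by
  have hc := ZFSet.rank_lt_of_mem ‹c ∈ b›
  rcases ‹b ∈ i ∨ b = i› with hb | rfl
  · exact hc.trans (ZFSet.rank_lt_of_mem hb)
  · exact hc

theorem StratFilterPropZ.filterPropZ (h : StratFilterPropZ κ γ) (hγ : γ.IsOrdinal) :
    FilterPropZ κ γ := by
  rintro θ hθ hκθ ⟨σ, hσ⟩
  obtain ⟨τ, hτ⟩ := h θ hθ hκθ
  let Fs := judgeMoves σ τ
  let Ms (b : ZFSet.{u}) := σ b (restrLt Fs b)
  have hFs : (fun i => τ i (restrLe Ms i)) = Fs := by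
    funext i
    simp only [Fs]
    rw [judgeMoves]
    rfl
  obtain ⟨hσ_legal, hσ_wins⟩ := hσ Fs
  obtain ⟨hτ_legal, hτ_wins⟩ := hτ Ms
  rw [hFs] at hτ_legal hτ_wins
  have legal : ∀ i ∈ γ, ChalLegalAt κ θ Ms Fs i ∧ JudgeLegalAt κ Ms Fs i := by
    intro i
    induction i using ZFSet.inductionOn with
    | h i ih =>
      intro hi
      have ih (j) (hj : j ∈ i) := ih j hj (hγ.mem_trans hj hi)
      have hchal : ChalLegalAt κ θ Ms Fs i := hσ_legal i hi fun j hj => (ih j hj).2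
      refine ⟨hchal, hτ_legal i hi ?_⟩
      rintro j (hj | rfl)
      exacts [(ih j hj).1, hchal]
  exact hσ_wins (fun i hi => (legal i hi).2) (hτ_wins fun i hi => (legal i hi).1)

end Strategies

section Axioms

section LiftAt

variable {L : FirstOrder.Language} {N α : Type*} [L.Structure N] {n : ℕ} {v : α → N}
  {xs : Fin n → N} {a b x y : N}

theorem realize_liftAt_two_snoc {φ : L.BoundedFormula α (n + 1)} :
    (φ.liftAt 2 n).Realize v (Fin.snoc (Fin.snoc (Fin.snoc xs a) b) x : Fin (n + 3) → N) ↔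
      φ.Realize v (Fin.snoc xs x : Fin (n + 1) → N) := by
  rw [BoundedFormula.realize_liftAt (by omega)]
  congr! with i
  grind [Fin.snoc]

theorem realize_liftAt_one_snoc_snoc {φ : L.BoundedFormula α (n + 2)} :
    (φ.liftAt 1 n).Realize v (Fin.snoc (Fin.snoc (Fin.snoc xs a) x) y : Fin (n + 3) → N) ↔
      φ.Realize v (Fin.snoc (Fin.snoc xs x) y : Fin (n + 2) → N) := by
  rw [BoundedFormula.realize_liftAt (by omega)]
  congr! with i
  grind [Fin.snoc]

theorem realize_liftAt_two_snoc_snoc {φ : L.BoundedFormula α (n + 2)} :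
    (φ.liftAt 2 n).Realize v
        (Fin.snoc (Fin.snoc (Fin.snoc (Fin.snoc xs a) b) x) y : Fin (n + 4) → N) ↔
      φ.Realize v (Fin.snoc (Fin.snoc xs x) y : Fin (n + 2) → N) := by
  rw [BoundedFormula.realize_liftAt (by omega)]
  congr! with i
  grind [Fin.snoc]

end LiftAt

variable {S : Set ZFSet.{u}}

@[simp]
theorem realize_memF {n : ℕ} {t s : memLang.Term (Empty ⊕ Fin n)} {v : Empty → S}
    {xs : Fin n → S} : (memF t s).Realize v xs ↔
      (t.realize (Sum.elim v xs) : S).1 ∈ (s.realize (Sum.elim v xs) : S).1 :=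
  BoundedFormula.realize_rel₂ (L := memLang)

theorem models_extAx (hS : ∀ x ∈ S, x.toSet ⊆ S) : S ⊨ extAx := by
  have h : ∀ x ∈ S, ∀ y ∈ S, (∀ z ∈ S, z ∈ x ↔ z ∈ y) → x = y := fun x hx y hy hxy =>
    ZFSet.ext fun z => ⟨fun hz => (hxy z (hS x hx hz)).1 hz, fun hz => (hxy z (hS y hy hz)).2 hz⟩
  simpa [extAx, Sentence.Realize, Formula.Realize, Fin.snoc]

theorem models_emptyAx (h : ∅ ∈ S) : S ⊨ emptyAx := by
  have : ∃ x ∈ S, ∀ y ∈ S, y ∉ x := ⟨∅, h, fun y _ => ZFSet.notMem_empty y⟩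
  simpa [emptyAx, Sentence.Realize, Formula.Realize, Fin.snoc]

theorem models_pairAx (h : ∀ x ∈ S, ∀ y ∈ S, {x, y} ∈ S) : S ⊨ pairAx := by
  have : ∀ x ∈ S, ∀ y ∈ S, ∃ p, x ∈ p ∧ p ∈ S ∧ y ∈ p := fun x hx y hy =>
    ⟨{x, y}, by simp [h x hx y hy]⟩
  simpa [pairAx, Sentence.Realize, Formula.Realize, Fin.snoc]

theorem models_unionAx (h : ∀ x ∈ S, ⋃₀ x ∈ S) : S ⊨ unionAx := by
  have : ∀ x ∈ S, ∃ y ∈ S, ∀ z ∈ S, ∀ w ∈ S, z ∈ w → w ∈ x → z ∈ y := fun x hx =>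
    ⟨_, h x hx, fun z _ w _ hzw hwx => ZFSet.mem_sUnion.2 ⟨w, hwx, hzw⟩⟩
  simpa [unionAx, Sentence.Realize, Formula.Realize, Fin.snoc]

theorem models_infAx (hS : ∀ x ∈ S, x.toSet ⊆ S) {w : ZFSet.{u}} (hw : w ∈ S) (hempty : ∅ ∈ w)
    (hsucc : ∀ x ∈ w, insert x x ∈ w) : S ⊨ infAx := by
  have : ∃ w, (∃ x ∈ w, x ∈ S ∧ ∀ y ∈ S, y ∉ x) ∧ w ∈ S ∧
      ∀ x ∈ S, x ∈ w → ∃ y ∈ w, y ∈ S ∧ ∀ z ∈ S, z ∈ y ↔ z ∈ x ∨ z = x := by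
    refine ⟨w, ⟨∅, hempty, hS w hw hempty, fun y _ => ZFSet.notMem_empty y⟩, hw, fun x _ hx => ?_⟩
    refine ⟨insert x x, hsucc x hx, hS w hw (hsucc x hx), fun z _ => ?_⟩
    rw [ZFSet.mem_insert_iff, or_comm]
  simpa [infAx, Sentence.Realize, Formula.Realize, Fin.snoc]

theorem models_foundAx (hS : ∀ x ∈ S, x.toSet ⊆ S) : S ⊨ foundAx := by
  have : ∀ x ∈ S, ∀ y ∈ S, y ∈ x → ∃ m ∈ x, m ∈ S ∧ ∀ z ∈ S, z ∈ x → z ∉ m := by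
    intro x hx y _ hyx
    obtain ⟨m, hm, hxm⟩ := ZFSet.regularity x (by rintro rfl; exact ZFSet.notMem_empty y hyx)
    refine ⟨m, hm, hS x hx hm, fun z _ hzx hzm => ZFSet.notMem_empty z ?_⟩
    exact hxm ▸ ZFSet.mem_inter.2 ⟨hzx, hzm⟩
  simpa [foundAx, Sentence.Realize, Formula.Realize, Fin.snoc]

theorem models_choiceAx (hS : ∀ x ∈ S, x.toSet ⊆ S)
    (h : ∀ x ∈ S, ∀ f : x.toSet → ZFSet, (∀ a, f a ∈ S) → ZFSet.range f ∈ S) : S ⊨ choiceAx := by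
  have : ∀ x ∈ S, (∀ a ∈ S, a ∈ x → ∃ z ∈ S, z ∈ a) →
      (∀ a ∈ S, ∀ b ∈ S, a ∈ x → b ∈ x → ¬a = b → ∀ z ∈ a, z ∈ S → z ∉ b) →
      ∃ c ∈ S, ∀ a ∈ S, a ∈ x → ∃ z, (z ∈ a ∧ z ∈ c) ∧ z ∈ S ∧ ∀ w ∈ S, w ∈ a → w ∈ c → w = z := by
    intro x hx hne hdisj
    choose f hfS hf using fun a : x.toSet => hne a (hS x hx a.2) a.2
    refine ⟨ZFSet.range f, h x hx f hfS, fun a ha hax => ?_⟩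
    refine ⟨f ⟨a, hax⟩, ⟨hf ⟨a, hax⟩, ZFSet.mem_range_self _⟩, hfS _, fun w hw hwa hwc => ?_⟩
    obtain ⟨b, rfl⟩ := ZFSet.mem_range.1 hwc
    by_cases hb : b = a
    · exact congrArg f (Subtype.ext hb)
    · exact (hdisj b (hS x hx b.2) a ha b.2 hax hb _ (hf b) hw hwa).elim
  simpa [choiceAx, Sentence.Realize, Formula.Realize, Fin.snoc]

theorem models_sepAx (h : ∀ x ∈ S, ∀ y ⊆ x, y ∈ S) {n : ℕ}
    (φ : memLang.BoundedFormula Empty (n + 1)) : S ⊨ sepAx n φ := by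
  have (xs : Fin n → S) (a : S) : ∃ b : S, ∀ x : S,
      x.1 ∈ b.1 ↔ x.1 ∈ a.1 ∧ φ.Realize default (Fin.snoc xs x : Fin (n + 1) → S) := by
    refine ⟨⟨ZFSet.sep (fun z => ∃ hz : z ∈ S, φ.Realize default
      (Fin.snoc xs ⟨z, hz⟩ : Fin (n + 1) → S)) a, h a a.2 _ ZFSet.sep_subset⟩, fun x => ?_⟩
    simp
  simpa [sepAx, Sentence.Realize, BoundedFormula.realize_alls, realize_liftAt_two_snoc, Fin.snoc]

theorem models_collAx (hS : ∀ x ∈ S, x.toSet ⊆ S)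
    (h : ∀ x ∈ S, ∀ f : x.toSet → ZFSet, (∀ a, f a ∈ S) → ZFSet.range f ∈ S) {n : ℕ}
    (φ : memLang.BoundedFormula Empty (n + 2)) : S ⊨ collAx n φ := by
  have (xs : Fin n → S) (a : S) (ha : ∀ x : S, x.1 ∈ a.1 → ∃ y : S, φ.Realize default
        (Fin.snoc (Fin.snoc xs x : Fin (n + 1) → S) y : Fin (n + 2) → S)) :
      ∃ b : S, ∀ x : S, x.1 ∈ a.1 → ∃ y : S, y.1 ∈ b.1 ∧ φ.Realize default
        (Fin.snoc (Fin.snoc xs x : Fin (n + 1) → S) y : Fin (n + 2) → S) := by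
    choose f hf using fun x : a.1.toSet => ha ⟨x, hS a a.2 x.2⟩ x.2
    refine ⟨⟨ZFSet.range fun x => (f x).1, h a a.2 _ fun x => (f x).2⟩, fun x hx => ?_⟩
    exact ⟨f ⟨x, hx⟩, ZFSet.mem_range_self (⟨x, hx⟩ : a.1.toSet), hf ⟨x, hx⟩⟩
  simpa [collAx, Sentence.Realize, BoundedFormula.realize_alls, realize_liftAt_one_snoc_snoc,
    realize_liftAt_two_snoc_snoc, Fin.snoc]

end Axioms

section HereditarilySmall

open Cardinal

variable {θ x y d : ZFSet.{u}}

theorem small_of_mk_le_zcard {α : Type (u + 1)} (h : #α ≤ zcard x) : Small.{u} α :=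
  small_of_injective (Classical.choice h).injective

theorem mem_HZ_iff : x ∈ HZ θ ↔ zcard x < zcard θ ∧ x.toSet ⊆ HZ θ :=
  ZFSet.hereditarily_iff

theorem mem_HZ_of_mem (hx : x ∈ HZ θ) (hy : y ∈ x) : y ∈ HZ θ :=
  (mem_HZ_iff.1 hx).2 hy

theorem mem_HZ_of_subset (hx : x ∈ HZ θ) (hy : y ⊆ x) : y ∈ HZ θ :=
  mem_HZ_iff.2 ⟨(zcard_mono hy).trans_lt (mem_HZ_iff.1 hx).1, fun _ hz => mem_HZ_of_mem hx (hy hz)⟩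

theorem mem_HZ_of_isOrdinal (hx : x.IsOrdinal) (hxθ : zcard x < zcard θ) : x ∈ HZ θ := by
  induction x using ZFSet.inductionOn with
  | h x ih =>
    refine mem_HZ_iff.2 ⟨hxθ, fun y hy => ih y hy (hx.mem hy) ?_⟩
    exact (zcard_mono (hx.subset_of_mem hy)).trans_lt hxθ

theorem setCode_mem_HZ {Y : Set ZFSet.{u}} (hY : Y ⊆ HZ θ) (hYθ : #Y < zcard θ) :
    setCode Y ∈ HZ θ := by
  have : Small.{u} Y := small_of_mk_le_zcard hYθ.le
  rw [mem_HZ_iff, zcard, toSet_setCode]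
  exact ⟨hYθ, hY⟩

theorem range_mem_HZ {α : Type (u + 1)} [Small.{u} α] {f : α → ZFSet.{u}} (hα : #α < zcard θ)
    (hf : ∀ a, f a ∈ HZ θ) : ZFSet.range f ∈ HZ θ := by
  refine mem_HZ_iff.2 ⟨(zcard_range_le f).trans_lt hα, fun z hz => ?_⟩
  obtain ⟨a, rfl⟩ := ZFSet.mem_range.1 hz
  exact hf a

theorem insert_mem_HZ (hθ : ℵ₀ ≤ zcard θ) (hx : x ∈ HZ θ) (hy : y ∈ HZ θ) :
    insert x y ∈ HZ θ := by
  refine mem_HZ_iff.2 ⟨?_, fun z hz => ?_⟩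
  · have hcard : zcard (insert x y) ≤ zcard y + 1 := by
      simpa [zcard_eq_lift_card] using lift_le.{u + 1}.2 (ZFSet.card_insert_le (x := x) (y := y))
    exact hcard.trans_lt (add_lt_of_lt hθ (mem_HZ_iff.1 hy).1 (one_lt_aleph0.trans_le hθ))
  · obtain rfl | hz := ZFSet.mem_insert_iff.1 hz
    exacts [hx, mem_HZ_of_mem hy hz]

theorem doubleton_mem_HZ (hθ : ℵ₀ ≤ zcard θ) (hx : x ∈ HZ θ) (hy : y ∈ HZ θ) :
    {x, y} ∈ HZ θ := by
  have hempty : ∅ ∈ HZ θ := mem_HZ_of_subset hx (ZFSet.empty_subset x)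
  have hsingleton : {y} ∈ HZ θ := by simpa using insert_mem_HZ hθ hy hempty
  exact insert_mem_HZ hθ hx hsingleton

theorem pair_mem_HZ (hθ : ℵ₀ ≤ zcard θ) (hx : x ∈ HZ θ) (hy : y ∈ HZ θ) :
    ZFSet.pair x y ∈ HZ θ :=
  doubleton_mem_HZ hθ (ZFSet.pair_eq_singleton x ▸ doubleton_mem_HZ hθ hx hx)
    (doubleton_mem_HZ hθ hx hy)

theorem graph_mem_HZ {g : d.toSet → ZFSet.{u}} (hθ : ℵ₀ ≤ zcard θ) (hd : d ∈ HZ θ)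
    (hg : ∀ b, g b ∈ HZ θ) : graph d g ∈ HZ θ :=
  range_mem_HZ (mem_HZ_iff.1 hd).1 fun b => pair_mem_HZ hθ (mem_HZ_of_mem hd b.2) (hg b)

theorem sUnion_mem_HZ (hθ : (zcard θ).IsRegular) (hx : x ∈ HZ θ) : ⋃₀ x ∈ HZ θ := by
  refine mem_HZ_iff.2 ⟨?_, fun z hz => ?_⟩
  · have h : (⋃₀ x : ZFSet).toSet = ⋃ y ∈ x.toSet, y.toSet := by ext; simp
    rw [zcard, h, card_biUnion_lt_iff_forall_of_isRegular hθ (mem_HZ_iff.1 hx).1]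
    exact fun y hy => (mem_HZ_iff.1 (mem_HZ_of_mem hx hy)).1
  · obtain ⟨y, hy, hzy⟩ := ZFSet.mem_sUnion.1 hz
    exact mem_HZ_of_mem (mem_HZ_of_mem hx hy) hzy

theorem HZ_models_ZFCminus (hθ : (zcard θ).IsRegular) (hunc : ℵ₀ < zcard θ) :
    HZ θ ⊨ ZFCminus := by
  have htrans : ∀ x ∈ HZ θ, x.toSet ⊆ HZ θ := fun x hx => (mem_HZ_iff.1 hx).2
  have hrange : ∀ x ∈ HZ θ, ∀ f : x.toSet → ZFSet, (∀ a, f a ∈ HZ θ) → ZFSet.range f ∈ HZ θ :=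
    fun x hx f => range_mem_HZ (mem_HZ_iff.1 hx).1
  have homega : Ordinal.omega0.toZFSet ∈ HZ θ :=
    mem_HZ_of_isOrdinal (ZFSet.isOrdinal_toZFSet _)
      (by simpa [zcard_eq_lift_card] using hunc)
  rw [Theory.model_iff]
  rintro ψ ((hψ | hψ) | hψ)
  · rcases hψ with rfl | rfl | rfl | rfl | rfl | rfl | rfl
    · exact models_extAx htrans
    · exact models_emptyAx (mem_HZ_of_subset homega (ZFSet.empty_subset _))
    · exact models_pairAx fun x hx y hy => doubleton_mem_HZ hunc.le hx hy
    · exact models_unionAx fun x => sUnion_mem_HZ hθ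
    · refine models_infAx htrans homega ?_ fun x hx => ?_
      · exact Ordinal.mem_toZFSet_iff.2 ⟨0, Ordinal.omega0_pos, Ordinal.toZFSet_zero⟩
      · obtain ⟨n, hn, rfl⟩ := Ordinal.mem_toZFSet_iff.1 hx
        rw [← Ordinal.toZFSet_add_one, Ordinal.toZFSet_mem_toZFSet_iff]
        exact Ordinal.isSuccLimit_omega0.add_one_lt hn
    · exact models_foundAx htrans
    · exact models_choiceAx htrans hrange
  · obtain ⟨n, φ, rfl⟩ := Set.mem_iUnion.1 hψ
    exact models_sepAx (fun x hx y => mem_HZ_of_subset hx) φ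
  · obtain ⟨n, φ, rfl⟩ := Set.mem_iUnion.1 hψ
    exact models_collAx htrans hrange φ

end HereditarilySmall

section Closure

open Cardinal

universe v w

theorem isRegular_of_powerlt_self {c : Cardinal.{v}} (hc : ℵ₀ ≤ c) (h : c ^< c = c) :
    c.IsRegular := by
  refine ⟨hc, le_of_not_gt fun hcof => ?_⟩
  exact (lt_power_cof_ord hc).not_ge ((le_powerlt c hcof).trans_eq h)

/-- The `o`-th level of the closure of `X` under `F`. -/
noncomputable def closureLevel {α : Type v} (F : Set α → Set α) (X : Set α) (o : Ordinal.{v}) :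
    Set α :=
  X ∪ ⋃ a : Set.Iio o, F (closureLevel F X a)
termination_by o
decreasing_by exact a.2

section closureLevel

variable {α : Type v} {F : Set α → Set α} {X : Set α} {c : Cardinal.{v}}

theorem image_closureLevel_subset {a o : Ordinal.{v}} (h : a < o) :
    F (closureLevel F X a) ⊆ closureLevel F X o := by
  rw [closureLevel.eq_def F X o]
  exact (Set.subset_iUnion (fun a : Set.Iio o => F (closureLevel F X a)) ⟨a, h⟩).trans
    Set.subset_union_right

theorem closureLevel_mono : Monotone (closureLevel F X) := by
  intro a o hao
  rw [closureLevel]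
  refine Set.union_subset ?_ (Set.iUnion_subset fun b => ?_)
  · rw [closureLevel.eq_def F X o]
    exact Set.subset_union_left
  · exact image_closureLevel_subset (b.2.trans_le hao)

theorem mk_closureLevel_le (hc : ℵ₀ ≤ c) (hX : #X ≤ c) (hF : ∀ Y : Set α, #Y ≤ c → #(F Y) ≤ c)
    {o : Ordinal.{v}} (ho : o.card ≤ c) : #(closureLevel F X o) ≤ c := by
  induction o using WellFoundedLT.induction with
  | ind o ih =>
    rw [closureLevel, Set.iUnion_subtype]
    refine (mk_union_le _ _).trans (add_le_of_le hc hX ?_)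
    refine mk_biUnion_le_of_le ho hc _ fun a ha => hF _ (ih a ha ?_)
    exact (Ordinal.card_le_card ha.le).trans ho

theorem exists_subset_closureLevel (hc : c.IsRegular) {Z : Set α} (hZc : #Z < c)
    (hZ : Z ⊆ ⋃ o < c.ord, closureLevel F X o) : ∃ o < c.ord, Z ⊆ closureLevel F X o := by
  have hlevel : ∀ z : Z, ∃ o < c.ord, z.1 ∈ closureLevel F X o := fun z => by
    simpa using hZ z.2
  choose r hr hzr using hlevel
  refine ⟨⨆ z, r z, Ordinal.iSup_lt_of_lt_cof (by rwa [hc.cof_ord]) hr, fun z hz => ?_⟩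
  exact closureLevel_mono (Ordinal.le_iSup r ⟨z, hz⟩) (hzr ⟨z, hz⟩)

theorem exists_closed_superset (hc : c.IsRegular) (hX : #X ≤ c) (hmono : Monotone F)
    (hF : ∀ Y : Set α, #Y ≤ c → #(F Y) ≤ c) :
    ∃ N : Set α, X ⊆ N ∧ #N ≤ c ∧ ∀ Z ⊆ N, #Z < c → F Z ⊆ N := by
  have hlimit : Order.IsSuccLimit c.ord := isSuccLimit_ord hc.aleph0_le
  have hsub : ∀ o < c.ord, closureLevel F X o ⊆ ⋃ o < c.ord, closureLevel F X o :=
    fun o ho => Set.subset_biUnion_of_mem (u := closureLevel F X) ho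
  refine ⟨⋃ o < c.ord, closureLevel F X o, ?_, ?_, fun Z hZ hZc => ?_⟩
  · refine Set.Subset.trans ?_ (hsub 0 hlimit.bot_lt)
    rw [closureLevel]
    exact Set.subset_union_left
  · refine mk_biUnion_le_of_le (card_ord c).le hc.aleph0_le _ fun o ho => ?_
    exact mk_closureLevel_le hc.aleph0_le hX hF (card_le_of_le_ord ho.le)
  · obtain ⟨o, ho, hZo⟩ := exists_subset_closureLevel hc hZc hZ
    exact (hmono hZo).trans
      ((image_closureLevel_subset (Order.lt_succ o)).trans (hsub _ (hlimit.succ_lt ho)))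

end closureLevel

theorem exists_elementarySubstructure_closed {L : FirstOrder.Language.{v, w}} {S : Type u}
    [L.Structure S] [Nonempty S] {c : Cardinal.{u}} (hc : c.IsRegular)
    (hL : lift.{u} L.card ≤ lift.{max v w} c) {F : Set S → Set S} (hmono : Monotone F)
    (hF : ∀ Y : Set S, #Y ≤ c → #(F Y) ≤ c) {X : Set S} (hX : #X ≤ c) :
    ∃ N : L.ElementarySubstructure S, X ⊆ N ∧ #N ≤ c ∧ ∀ Z ⊆ (N : Set S), #Z < c → F Z ⊆ N := by
  let skolemHull (Y : Set S) : Set S := Substructure.closure (L.sum L.skolem₁) Y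
  have hhull (Y : Set S) (hY : #Y ≤ c) : #(skolemHull Y) ≤ c := by
    refine lift_le.{max v w}.1 (Substructure.lift_card_closure_le.trans (max_le ?_ ?_))
    · simpa using hc.aleph0_le
    · refine add_le_of_le (by simpa using hc.aleph0_le) (lift_le.2 hY) ?_
      refine (lift_le.2 card_functions_sum_skolem₁_le).trans ?_
      simpa using ⟨hc.aleph0_le, hL⟩
  obtain ⟨N, hXN, hNc, hN⟩ := exists_closed_superset (F := fun Y => skolemHull Y ∪ F Y) hc hX
    (fun Y Z h => Set.union_subset_union (Substructure.closure_mono h) (hmono h))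
    (fun Y hY => (mk_union_le _ _).trans (add_le_of_le hc.aleph0_le (hhull Y hY) (hF Y hY)))
  let skolemClosed : (L.sum L.skolem₁).Substructure S :=
    { carrier := N
      fun_mem := fun {n} f x hx => by
        have hfin : #(Set.range x) < c :=
          (lt_aleph0_of_finite _).trans_le hc.aleph0_le
        refine hN _ (Set.range_subset_iff.2 hx) hfin (Or.inl ?_)
        exact Substructure.fun_mem _ f x fun i =>
          Substructure.subset_closure (Set.mem_range_self i) }
  exact ⟨skolemClosed.elementarySkolem₁Reduct, hXN, hNc,
    fun Z hZ hZc => Set.subset_union_right.trans (hN Z hZ hZc)⟩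

end Closure

section KappaModels

open Cardinal

variable {κ θ : ZFSet.{u}} {S T X Y : Set ZFSet.{u}}

theorem memLang_card_le : memLang.card ≤ ℵ₀ := by
  have : ∀ n, IsEmpty (memLang.Functions n) := fun _ => inferInstanceAs (IsEmpty Empty)
  have : ∀ n, Subsingleton (memLang.Relations n) := fun _ => ⟨by rintro ⟨⟩ ⟨⟩; rfl⟩
  have : Countable memLang.Symbols := by unfold Language.Symbols; infer_instance
  exact mk_le_aleph0

theorem realize_sentence_iff {L : FirstOrder.Language} {M : Type*} [L.Structure M]
    (ψ : L.Sentence) (v : Empty → M) (x : Fin 0 → M) :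
    M ⊨ ψ ↔ BoundedFormula.Realize ψ v x := by
  rw [Subsingleton.elim v default, Subsingleton.elim x default]
  rfl

theorem ElemSub.models {Γ : memLang.Theory} (h : ElemSub S T) (hT : T ⊨ Γ) : S ⊨ Γ := by
  obtain ⟨_, h⟩ := h
  rw [Theory.model_iff] at hT ⊢
  intro ψ hψ
  rw [realize_sentence_iff ψ Empty.elim default, h 0 ψ, ← realize_sentence_iff]
  exact hT ψ hψ

theorem elemSub_image_val (N : memLang.ElementarySubstructure S) :
    ElemSub (Subtype.val '' (N : Set S)) S := by
  have hsub : Subtype.val '' (N : Set S) ⊆ S := by simp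
  let image := Equiv.Set.image _ (N : Set S) Subtype.val_injective
  let e : ↥(Subtype.val '' (N : Set S)) ≃[memLang] N :=
    { image.symm with
      map_fun' := fun f => (f : Empty).elim
      map_rel' := fun r x => by
        obtain ⟨y, rfl⟩ := image.surjective.comp_left x
        cases r
        simp only [Function.comp_def, Equiv.toFun_as_coe, Equiv.symm_apply_apply]
        rfl }
  have he (z) : ((e z : S) : ZFSet) = z := congrArg Subtype.val (image.apply_symm_apply z)
  refine ⟨hsub, fun n φ x => ?_⟩
  have hcomp : N.subtype ∘ e ∘ x = fun i => ⟨x i, hsub (x i).2⟩ :=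
    funext fun i => Subtype.ext (he (x i))
  rw [← StrongHomClass.realize_boundedFormula e, ← N.subtype.map_boundedFormula, hcomp,
    Subsingleton.elim (N.subtype ∘ _) Empty.elim]

/-- The `<κ`-sequences of elements of `Y`, as functions from some `δ ∈ κ` into a set contained in
`Y`. -/
def shortSequences (κ : ZFSet.{u}) (Y : Set ZFSet.{u}) : Set ZFSet.{u} :=
  {f | ∃ δ ∈ κ, ∃ y : ZFSet, y.toSet ⊆ Y ∧ ZFSet.IsFunc δ y f}

theorem ltClosed_iff : LtClosed κ Y ↔ shortSequences κ Y ⊆ Y :=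
  ⟨fun h _ ⟨δ, hδ, y, hy, hf⟩ => h δ y _ hδ hy hf,
    fun h δ y _ hδ hy hf => h ⟨δ, hδ, y, hy, hf⟩⟩

theorem shortSequences_mono : Monotone (shortSequences κ) :=
  fun _ _ h _ ⟨δ, hδ, y, hy, hf⟩ => ⟨δ, hδ, y, hy.trans h, hf⟩

theorem mk_shortSequences_le (hκ : IsCardZ κ) (hinf : ℵ₀ ≤ zcard κ)
    (hpow : zcard κ ^< zcard κ = zcard κ) (hY : #Y ≤ zcard κ) :
    #(shortSequences κ Y) ≤ zcard κ := by
  have hunion : shortSequences κ Y =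
      ⋃ δ ∈ κ.toSet, {f | ∃ y : ZFSet, y.toSet ⊆ Y ∧ ZFSet.IsFunc δ y f} := by
    ext
    simp [shortSequences]
  have hdomain (δ : κ.toSet) :
      #{f | ∃ y : ZFSet, y.toSet ⊆ Y ∧ ZFSet.IsFunc δ y f} ≤ zcard κ :=
    calc
      _ ≤ #Y ^ zcard δ.1 := mk_isFunc_le _ _
      _ ≤ zcard κ ^ zcard δ.1 := power_le_power_right hY
      _ ≤ zcard κ := (le_powerlt _ (hκ.2 δ δ.2)).trans_eq hpow
  rw [hunion]
  calc
    _ ≤ zcard κ * _ := mk_biUnion_le _ _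
    _ ≤ zcard κ * zcard κ := by gcongr; exact ciSup_le' hdomain
    _ = zcard κ := mul_eq_self hinf

theorem exists_mem_shortSequences_of_mk_lt (hκ : IsCardZ κ) {f : ZFSet.{u}}
    (hf : f ∈ shortSequences κ Y) : ∃ Z ⊆ Y, #Z < zcard κ ∧ f ∈ shortSequences κ Z := by
  obtain ⟨δ, hδ, y, hy, hf⟩ := hf
  obtain ⟨g, hg, rfl⟩ := exists_eq_graph hf
  have hgraph : ZFSet.IsFunc δ (ZFSet.range g) (graph δ g) :=
    isFunc_graph fun b => ZFSet.mem_range.2 ⟨b, rfl⟩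
  refine ⟨(ZFSet.range g).toSet, fun z hz => ?_, (zcard_range_le g).trans_lt (hκ.2 δ hδ),
    δ, hδ, _, subset_rfl, hgraph⟩
  obtain ⟨b, rfl⟩ := ZFSet.mem_range.1 hz
  exact hy (hg b)

theorem exists_elemSub_ltClosed (hκ : IsCardZ κ) (hinf : ℵ₀ ≤ zcard κ)
    (hpow : zcard κ ^< zcard κ = zcard κ) (hS : LtClosed κ S) (hne : S.Nonempty) (hXS : X ⊆ S)
    (hX : #X ≤ zcard κ) :
    ∃ M, X ⊆ M ∧ #M ≤ zcard κ ∧ LtClosed κ M ∧ ElemSub M S := by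
  have : Nonempty S := hne.to_subtype
  have hpreimage (Z : Set ZFSet.{u}) : #(Subtype.val ⁻¹' Z : Set S) ≤ #Z :=
    mk_preimage_of_injective _ _ Subtype.val_injective
  obtain ⟨N, hXN, hNc, hN⟩ := exists_elementarySubstructure_closed (L := memLang) (S := S)
    (F := fun Y => Subtype.val ⁻¹' shortSequences κ (Subtype.val '' Y))
    (isRegular_of_powerlt_self hinf hpow)
    (by simpa using (lift_le.2 memLang_card_le).trans (by simpa using hinf))
    (fun _ _ h => Set.preimage_mono (shortSequences_mono (Set.image_mono h)))
    (fun Y hY => (hpreimage _).trans (mk_shortSequences_le hκ hinf hpow (mk_image_le.trans hY)))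
    ((hpreimage X).trans hX)
  refine ⟨Subtype.val '' (N : Set S), fun x hx => ⟨⟨x, hXS hx⟩, hXN hx, rfl⟩,
    mk_image_le.trans hNc, ltClosed_iff.2 fun f hf => ?_, elemSub_image_val N⟩
  obtain ⟨Z, hZ, hZc, hfZ⟩ := exists_mem_shortSequences_of_mk_lt hκ hf
  have hZS : Z ⊆ S := hZ.trans (by simp)
  refine ⟨⟨f, ltClosed_iff.1 hS (shortSequences_mono hZS hfZ)⟩, ?_, rfl⟩
  refine hN (Subtype.val ⁻¹' Z) ?_ ((hpreimage Z).trans_lt hZc) ?_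
  · exact (Set.preimage_mono hZ).trans_eq (Set.preimage_image_eq _ Subtype.val_injective)
  · simpa [Set.inter_eq_right.2 hZS] using hfZ

theorem ltClosed_HZ (hκ : κ ∈ HZ θ) (hinf : ℵ₀ ≤ zcard θ) : LtClosed κ (HZ θ) := by
  intro δ y f hδ hy hf
  obtain ⟨g, hg, rfl⟩ := exists_eq_graph hf
  exact graph_mem_HZ hinf (mem_HZ_of_mem hκ hδ) fun b => hy (hg b)

theorem exists_kappaModelZ (hκ : IsCardZ κ) (hinf : ℵ₀ ≤ zcard κ)
    (hpow : zcard κ ^< zcard κ = zcard κ) (hθ : (zcard θ).IsRegular) (hκθ : zcard κ < zcard θ)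
    (hXθ : X ⊆ HZ θ) (hX : #X ≤ zcard κ) :
    ∃ M, X ⊆ M ∧ KappaModelZ κ M ∧ ElemSub M (HZ θ) := by
  have hκmem : κ ∈ HZ θ := mem_HZ_of_isOrdinal hκ.1 hκθ
  have hsub : X ∪ insert κ κ.toSet ⊆ HZ θ :=
    Set.union_subset hXθ (Set.insert_subset hκmem (mem_HZ_iff.1 hκmem).2)
  have hcard : #↑(X ∪ insert κ κ.toSet) ≤ zcard κ :=
    (mk_union_le _ _).trans (add_le_of_le hinf hX
      (mk_insert_le.trans (add_one_eq hinf).le))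
  obtain ⟨M, hXM, hM, hclosed, helem⟩ := exists_elemSub_ltClosed hκ hinf hpow
    (ltClosed_HZ hκmem hθ.aleph0_le) ⟨κ, hκmem⟩ hsub hcard
  have hκM : insert κ κ.toSet ⊆ M := Set.subset_union_right.trans hXM
  have hMκ : #M = zcard κ :=
    hM.antisymm (mk_le_mk_of_subset ((Set.subset_insert _ _).trans hκM))
  exact ⟨M, Set.subset_union_left.trans hXM,
    ⟨⟨hMκ, hκM, helem.models (HZ_models_ZFCminus hθ (hinf.trans_lt hκθ))⟩, hclosed⟩, helem⟩

end KappaModels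

section Bookkeeping

open Cardinal

variable {κ θ i : ZFSet.{u}}

theorem zcard_powerset (x : ZFSet.{u}) : zcard x.powerset = 2 ^ zcard x := by
  simp [zcard_eq_lift_card]

theorem zcard_funs_le (d y : ZFSet.{u}) : zcard (d.funs y) ≤ zcard y ^ zcard d := by
  refine le_trans (mk_le_mk_of_subset fun f hf => ?_) (mk_isFunc_le d y.toSet)
  exact ⟨y, subset_rfl, ZFSet.mem_funs.1 hf⟩

theorem zcard_powerset_union_funs_le (hinf : ℵ₀ ≤ zcard κ) :
    zcard (κ.powerset ∪ κ.funs κ.powerset) ≤ 2 ^ zcard κ := by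
  have hfuns : zcard (κ.funs κ.powerset) ≤ 2 ^ zcard κ := by
    refine (zcard_funs_le _ _).trans_eq ?_
    rw [zcard_powerset, ← power_mul, mul_eq_self hinf]
  have hunion : (κ.powerset ∪ κ.funs κ.powerset).toSet =
      κ.powerset.toSet ∪ (κ.funs κ.powerset).toSet := by ext; simp
  rw [zcard, hunion]
  exact (mk_union_le _ _).trans
    (add_le_of_le (hinf.trans (cantor _).le) (zcard_powerset κ).le hfuns)

theorem powerset_union_funs_subset_HZ (hκ : κ ∈ HZ θ) (hinf : ℵ₀ ≤ zcard θ) :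
    (κ.powerset ∪ κ.funs κ.powerset).toSet ⊆ HZ θ := by
  intro x hx
  rcases ZFSet.mem_union.1 hx with hx | hx
  · exact mem_HZ_of_subset hκ (ZFSet.mem_powerset.1 hx)
  · obtain ⟨g, hg, rfl⟩ := exists_eq_graph (ZFSet.mem_funs.1 hx)
    exact graph_mem_HZ hinf hκ fun b => mem_HZ_of_subset hκ (ZFSet.mem_powerset.1 (hg b))

theorem exists_enumeration {E γ : ZFSet.{u}} (hE : E.toSet.Nonempty) (hEγ : zcard E ≤ zcard γ) :
    ∃ e : ZFSet.{u} → ZFSet.{u}, (∀ i, e i ∈ E) ∧ ∀ x ∈ E, ∃ i ∈ γ, e i = x := by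
  have : Nonempty E.toSet := hE.to_subtype
  obtain ⟨f⟩ := hEγ
  have hinj : Function.Injective fun x : E.toSet => (f x : ZFSet) :=
    Subtype.val_injective.comp f.injective
  refine ⟨fun i => (Function.invFun (fun x : E.toSet => (f x : ZFSet)) i : E.toSet),
    fun i => Subtype.prop _, fun x hx => ⟨f ⟨x, hx⟩, (f ⟨x, hx⟩).2, ?_⟩⟩
  exact congrArg Subtype.val (Function.leftInverse_invFun hinj ⟨x, hx⟩)

/-- Some `κ`-model `M ≺ H(θ)` containing all elements of `Z`; a junk value if there is none. -/
noncomputable def kappaModelHull (κ θ : ZFSet.{u}) (Z : Set ZFSet.{u}) : Set ZFSet.{u} :=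
  Classical.epsilon fun M => Z ⊆ M ∧ KappaModelZ κ M ∧ ElemSub M (HZ θ)

/-- The sets which the rules of the game require in the challenger's `i`-th model, where `Ms` and
`Fs` are the moves made before stage `i`. -/
noncomputable def history (i : ZFSet.{u}) (Ms Fs : i.toSet → Set ZFSet.{u}) : Set ZFSet.{u} :=
  {graph i fun b => setCode (Ms b), graph i fun b => setCode (Fs b ∩ Ms b)} ∪ ⋃ b, Ms b

/-- The challenger's `i`-th move in the run in which the judge plays `Fs` and the challenger
always adds `e i` to his `i`-th model. -/
noncomputable def bookkeepingModel (κ θ : ZFSet.{u}) (e : ZFSet.{u} → ZFSet.{u})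
    (Fs : ZFSet.{u} → Set ZFSet.{u}) (i : ZFSet.{u}) : Set ZFSet.{u} :=
  kappaModelHull κ θ
    (insert (e i) (history i (fun b => bookkeepingModel κ θ e Fs b) fun b => Fs b))
termination_by i.rank
decreasing_by exact ZFSet.rank_lt_of_mem b.2

theorem bookkeepingModel_congr {e : ZFSet.{u} → ZFSet.{u}} {Fs Gs : ZFSet.{u} → Set ZFSet.{u}}
    (hi : i.IsOrdinal) (h : ∀ b ∈ i, Fs b = Gs b) :
    bookkeepingModel κ θ e Fs i = bookkeepingModel κ θ e Gs i := by
  induction i using ZFSet.inductionOn with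
  | h i ih =>
    have hmodels : (fun b : i.toSet => bookkeepingModel κ θ e Fs b) =
        fun b : i.toSet => bookkeepingModel κ θ e Gs b :=
      funext fun b => ih b b.2 (hi.mem b.2) fun c hc => h c (hi.mem_trans hc b.2)
    have hfilters : (fun b : i.toSet => Fs b) = fun b : i.toSet => Gs b :=
      funext fun b => h b b.2
    rw [bookkeepingModel, bookkeepingModel, hmodels, hfilters]

theorem history_subset_HZ (hθ : ℵ₀ ≤ zcard θ) (hi : i ∈ HZ θ) {Ms Fs : i.toSet → Set ZFSet.{u}}
    (hMs : ∀ b, Ms b ⊆ HZ θ) (hcard : ∀ b, #(Ms b) < zcard θ) : history i Ms Fs ⊆ HZ θ := by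
  rintro x ((rfl | rfl) | hx)
  · exact graph_mem_HZ hθ hi fun b => setCode_mem_HZ (hMs b) (hcard b)
  · exact graph_mem_HZ hθ hi fun b => setCode_mem_HZ (Set.inter_subset_right.trans (hMs b))
      ((mk_le_mk_of_subset Set.inter_subset_right).trans_lt (hcard b))
  · exact Set.iUnion_subset hMs hx

theorem mk_history_le {c : Cardinal.{u + 1}} (hc : ℵ₀ ≤ c) (hi : zcard i ≤ c)
    {Ms Fs : i.toSet → Set ZFSet.{u}} (hMs : ∀ b, #(Ms b) ≤ c) : #(history i Ms Fs) ≤ c := by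
  refine (mk_union_le _ _).trans (add_le_of_le hc ?_ ?_)
  · exact (Set.toFinite _).lt_aleph0.le.trans hc
  · calc
      #(⋃ b, Ms b) ≤ zcard i * _ := mk_iUnion_le _
      _ ≤ c * c := by gcongr; exact ciSup_le' hMs
      _ = c := mul_eq_self hc

theorem chalLegalAt_of_history_subset {Ms Fs : ZFSet.{u} → Set ZFSet.{u}}
    (hsmall : ∀ b ∈ i, Small.{u} (Ms b)) (hmodel : KappaModelZ κ (Ms i))
    (helem : ElemSub (Ms i) (HZ θ))
    (hhist : history i (fun b => Ms b) (fun b => Fs b) ⊆ Ms i) : ChalLegalAt κ θ Ms Fs i := by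
  have hcodes {G : ZFSet.{u} → Set ZFSet.{u}} (hG : ∀ b ∈ i, Small.{u} (G b)) :
      CodesSetSeq (graph i fun b => setCode (G b)) i G := by
    refine ⟨exists_isFunc_graph _, fun b v hb hv => ?_⟩
    obtain ⟨_, rfl⟩ := pair_mem_graph.1 hv
    have := hG b hb
    exact toSet_setCode _
  refine ⟨fun j hj => ?_, hmodel, helem, ⟨_, hhist (by simp [history]), hcodes hsmall⟩,
    ⟨_, hhist (by simp [history]), hcodes fun b hb => ?_⟩⟩
  · exact (Set.subset_iUnion (fun b : i.toSet => Ms b) ⟨j, hj⟩).trans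
      (Set.subset_union_right.trans hhist)
  · have := hsmall b hb
    exact small_subset Set.inter_subset_right

theorem bookkeepingModel_spec (hκ : IsCardZ κ) (hinf : ℵ₀ ≤ zcard κ)
    (hpow : zcard κ ^< zcard κ = zcard κ) (hθ : (zcard θ).IsRegular) (hκθ : zcard κ < zcard θ)
    {e : ZFSet.{u} → ZFSet.{u}} (he : ∀ i, e i ∈ HZ θ) (Fs : ZFSet.{u} → Set ZFSet.{u})
    (hi : i.IsOrdinal) (hiκ : zcard i ≤ zcard κ) :
    insert (e i) (history i (fun b => bookkeepingModel κ θ e Fs b) fun b => Fs b) ⊆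
        bookkeepingModel κ θ e Fs i ∧
      KappaModelZ κ (bookkeepingModel κ θ e Fs i) ∧
        ElemSub (bookkeepingModel κ θ e Fs i) (HZ θ) := by
  induction i using ZFSet.inductionOn with
  | h i ih =>
    have hearlier (b : i.toSet) := ih b b.2 (hi.mem b.2)
      ((zcard_mono (hi.subset_of_mem b.2)).trans hiκ)
    have hcard (b : i.toSet) : #(bookkeepingModel κ θ e Fs b) = zcard κ :=
      (hearlier b).2.1.1.1
    have hsub : insert (e i) (history i (fun b => bookkeepingModel κ θ e Fs b) fun b => Fs b) ⊆
        HZ θ :=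
      Set.insert_subset (he i) (history_subset_HZ hθ.aleph0_le
        (mem_HZ_of_isOrdinal hi (hiκ.trans_lt hκθ)) (fun b => (hearlier b).2.2.1)
        fun b => (hcard b).trans_lt hκθ)
    have hsize : #↑(insert (e i)
        (history i (fun b => bookkeepingModel κ θ e Fs b) fun b => Fs b)) ≤ zcard κ :=
      mk_insert_le.trans (add_le_of_le hinf (mk_history_le hinf hiκ fun b => (hcard b).le)
        (one_le_aleph0.trans hinf))
    rw [bookkeepingModel]
    exact Classical.epsilon_spec (exists_kappaModelZ hκ hinf hpow hθ hκθ hsub hsize)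

theorem bookkeepingModel_restrLt {e : ZFSet.{u} → ZFSet.{u}} {Fs : ZFSet.{u} → Set ZFSet.{u}}
    (hi : i.IsOrdinal) :
    bookkeepingModel κ θ e (restrLt Fs i) i = bookkeepingModel κ θ e Fs i :=
  bookkeepingModel_congr hi fun _ hb => if_pos hb

theorem exists_judgeWinsRun_of_not_exists_chalWS {γ : ZFSet.{u}} (hκ : IsCardZ κ)
    (hinf : ℵ₀ ≤ zcard κ) (hpow : zcard κ ^< zcard κ = zcard κ) (hθ : (zcard θ).IsRegular)
    (hκθ : zcard κ < zcard θ) (hγ : γ.IsOrdinal) (hγκ : ∀ i ∈ γ, zcard i ≤ zcard κ)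
    (h : ¬∃ σ, ChalWS κ θ γ σ) {e : ZFSet.{u} → ZFSet.{u}} (he : ∀ i, e i ∈ HZ θ) :
    ∃ Ms Fs, (∀ i ∈ γ, e i ∈ Ms i) ∧ JudgeWinsRun κ γ Ms Fs := by
  have hnot : ¬ChalWS κ θ γ fun i Fs => bookkeepingModel κ θ e Fs i := fun hσ => h ⟨_, hσ⟩
  obtain ⟨Fs, hFs⟩ := not_forall.1 hnot
  let Ms (i : ZFSet.{u}) := bookkeepingModel κ θ e (restrLt Fs i) i
  have hMs {i} (hi : i.IsOrdinal) : Ms i = bookkeepingModel κ θ e Fs i :=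
    bookkeepingModel_restrLt hi
  have hspec {i} (hi : i ∈ γ) : insert (e i) (history i (fun b => Ms b) fun b => Fs b) ⊆ Ms i ∧
      KappaModelZ κ (Ms i) ∧ ElemSub (Ms i) (HZ θ) := by
    have hearlier : (fun b : i.toSet => Ms b) = fun b : i.toSet => bookkeepingModel κ θ e Fs b :=
      funext fun b => hMs ((hγ.mem hi).mem b.2)
    rw [hearlier, hMs (hγ.mem hi)]
    exact bookkeepingModel_spec hκ hinf hpow hθ hκθ he Fs (hγ.mem hi) (hγκ i hi)
  have hlegal {i} (hi : i ∈ γ) : ChalLegalAt κ θ Ms Fs i :=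
    chalLegalAt_of_history_subset
      (fun b hb => small_of_mk_le_zcard (hspec (hγ.mem_trans hb hi)).2.1.1.1.le)
      (hspec hi).2.1 (hspec hi).2.2 ((Set.subset_insert _ _).trans (hspec hi).1)
  refine ⟨Ms, Fs, fun i hi => (hspec hi).1 (Set.mem_insert _ _), ?_⟩
  by_contra hlost
  exact hFs ⟨fun i hi _ => hlegal hi, fun _ => hlost⟩

theorem measurableZ_of_not_exists_chalWS {γ : ZFSet.{u}} (hκ : IsCardZ κ)
    (hinf : ℵ₀ ≤ zcard κ) (hpow : zcard κ ^< zcard κ = zcard κ) (hθ : (zcard θ).IsRegular)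
    (hκθ : zcard κ < zcard θ) (hγ : γ.IsOrdinal) (hγκ : ∀ i ∈ γ, zcard i ≤ zcard κ)
    (hκγ : 2 ^ zcard κ ≤ zcard γ) (h : ¬∃ σ, ChalWS κ θ γ σ) : MeasurableZ κ := by
  have hne : (κ.powerset ∪ κ.funs κ.powerset).toSet.Nonempty :=
    ⟨κ, ZFSet.mem_union.2 (.inl (ZFSet.mem_powerset.2 subset_rfl))⟩
  obtain ⟨e, hemem, hesurj⟩ :=
    exists_enumeration hne ((zcard_powerset_union_funs_le hinf).trans hκγ)
  have he (i : ZFSet.{u}) : e i ∈ HZ θ :=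
    powerset_union_funs_subset_HZ (mem_HZ_of_isOrdinal hκ.1 hκθ) hθ.aleph0_le (hemem i)
  obtain ⟨Ms, Fs, heMs, hwins⟩ :=
    exists_judgeWinsRun_of_not_exists_chalWS hκ hinf hpow hθ hκθ hγ hγκ h he
  refine MNormalZ.measurableZ hwins hκ (one_lt_aleph0.trans_le hinf) fun x hx => ?_
  obtain ⟨i, hi, rfl⟩ := hesurj x hx
  exact Set.mem_biUnion hi (heMs i hi)

end Bookkeeping

/-- **Observation 3.4** (Holy–Schlicht). For an uncountable cardinal `κ = κ^{<κ}` with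
`2^κ = κ⁺`, the following are equivalent: the `κ⁺`-filter property, the strategic
`κ⁺`-filter property, and measurability of `κ`. -/
theorem filter_property_κplus_iff_measurable (κ γ : ZFSet.{u})
    (hκcard : IsCardZ κ) (hunc : Cardinal.aleph0 < zcard κ)
    (hlt : (zcard κ) ^< (zcard κ) = zcard κ)
    (hch : (2 : Cardinal.{u + 1}) ^ (zcard κ) = Order.succ (zcard κ))
    (hγ : IsCardZ γ) (hγsucc : zcard γ = Order.succ (zcard κ)) :
    (FilterPropZ κ γ ↔ MeasurableZ κ) ∧ (StratFilterPropZ κ γ ↔ MeasurableZ κ) := by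
  have hγκ (i : ZFSet) (hi : i ∈ γ) : zcard i ≤ zcard κ :=
    Order.lt_succ_iff.1 (hγsucc ▸ hγ.2 i hi)
  have hκγ : zcard κ < zcard γ := hγsucc ▸ Order.lt_succ _
  have hreg : IsRegCard γ := ⟨hγ.1, hγsucc ▸ Cardinal.isRegular_succ hunc.le, hγ.2⟩
  have hmem : κ ∈ γ := (hγ.1.not_subset_iff_mem hκcard.1).1 fun h => (zcard_mono h).not_gt hκγ
  have hstrat : MeasurableZ κ → StratFilterPropZ κ γ := fun h =>
    h.stratFilterPropZ hκcard hunc ⟨κ, hmem⟩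
  have hfilter : StratFilterPropZ κ γ → FilterPropZ κ γ := fun h => h.filterPropZ hγ.1
  have hmeas : FilterPropZ κ γ → MeasurableZ κ := fun h =>
    measurableZ_of_not_exists_chalWS hκcard hunc.le hlt hreg.2.1 hκγ hγ.1 hγκ
      (hch.trans hγsucc.symm).le (h γ hreg hmem)
  exact ⟨⟨hmeas, hfilter ∘ hstrat⟩, ⟨hmeas ∘ hfilter, hstrat⟩⟩
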